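/- The tree inversion enumerator evaluated at q = −1 equals the zigzag (Euler) number: I_n(−1) = E_n, where E_n is the number of alternating permutations in S_n. -/

import Mathlib

open Finset

/-- `j` lies on the unique path from `i` to the root `0` in the tree `T`. -/
def OnPath {n : ℕ} (T : SimpleGraph (Fin (n+1))) (i j : Fin (n+1)) : Prop :=
  ∀ p : T.Walk i 0, p.IsPath → j ∈ p.support

/-- The number of inversions of a tree on `{0,...,n}` rooted at `0`: pairs
`(i,j)` with `1 ≤ i < j ≤ n` such that `j` is on the path from `i` to `0`. -/
noncomputable def treeInv {n : ℕ} (T : SimpleGraph (Fin (n+1))) : ℕ :=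
  Nat.card {p : Fin (n+1) × Fin (n+1) //
    0 < p.1.val ∧ p.1 < p.2 ∧ OnPath T p.1 p.2}

/-- A permutation `σ = σ₁σ₂⋯σₙ ∈ S_n` (0-indexed here) is alternating:
`σ₁ < σ₂ > σ₃ < σ₄ > ⋯`. -/
def IsAlternating {n : ℕ} (σ : Equiv.Perm (Fin n)) : Prop :=
  ∀ p : Fin n × Fin n, p.1.val + 1 = p.2.val →
    (Even p.1.val → σ p.1 < σ p.2) ∧ (¬ Even p.1.val → σ p.2 < σ p.1)

/-- Euler numbers by recursion. -/
def eulerZ : ℕ → ℕ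
  | 0 => 1
  | n + 1 => ∑ k : Fin (n+1), if Even k.val then n.choose k * (eulerZ k * eulerZ (n - k)) else 0

theorem eulerZ_succ (n : ℕ) : eulerZ (n+1) =
    ∑ k ∈ Finset.range (n+1), n.choose k * (if Even k then eulerZ k * eulerZ (n-k) else 0) := by
  rw [eulerZ, Finset.sum_range]
  refine Finset.sum_congr rfl fun k _ => ?_
  split_ifs <;> simp

/-- Alternating lists with respect to a relation. -/
def AltL {α : Type} : (α → α → Prop) → List α → Prop
  | _, [] => True
  | _, [_] => True
  | r, x :: y :: l => r x y ∧ AltL (fun a b => r b a) (y :: l)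

theorem altL_append {α : Type} (r : α → α → Prop) (m : α) (l2 : List α) (hl2 : ∀ x ∈ l2, r m x) (hirr : ∀ x, r m x → ¬ r x m) :
    ∀ l1 : List α, (∀ x ∈ l1, r m x) →
    (AltL r (l1 ++ m :: l2) ↔ AltL r l1 ∧ Even l1.length ∧ AltL (fun a b => r b a) l2)
  | [], _ => by
    cases l2 with
    | nil => simp [AltL]
    | cons y l => simp [AltL, hl2 y (by simp)]
  | [x], h => by
    have := hirr x (h x (by simp))
    simp [AltL, this]
  | [x, y], h => by
    have h2 : r m y := h y (by simp)
    have := altL_append r m l2 hl2 hirr [] (by simp)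
    simp only [List.nil_append] at this
    simp [AltL, h2, this]
  | x :: y :: z :: l, h => by
    have := altL_append r m l2 hl2 hirr (z :: l) (fun w hw => h w (by simp at hw ⊢; tauto))
    simp only [List.cons_append] at this
    simp only [List.cons_append, AltL, this]
    have : Even (x :: y :: z :: l).length ↔ Even (z :: l).length := by
      simp [Nat.even_add_one]
    rw [this]; tauto

theorem altL_iff {α : Type} : ∀ (l : List α) (r : α → α → Prop), AltL r l ↔
    ∀ i (h : i + 1 < l.length), (Even i → r l[i] l[i+1]) ∧ (¬ Even i → r l[i+1] l[i])
  | [], r => by simp [AltL]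
  | [x], r => by simp [AltL]
  | x :: y :: l, r => by
    rw [AltL, altL_iff (y :: l)]
    constructor
    · rintro ⟨h1, h2⟩ i hi
      cases i with
      | zero => simpa using h1
      | succ i =>
        have := h2 i (by simpa using hi)
        simp only [Nat.even_add_one, List.getElem_cons_succ]
        simp only [List.getElem_cons_succ] at this
        tauto
    · intro h
      refine ⟨by simpa using h 0 (by simp), fun i hi => ?_⟩
      have := h (i+1) (by simpa using hi)
      simp only [Nat.even_add_one, List.getElem_cons_succ] at this
      simp only [List.getElem_cons_succ]
      tauto

open Classical in
noncomputable def altSet {α : Type} (r : α → α → Prop) (S : Finset α) : Finset (List α) :=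
  S.val.lists.toFinset.filter (AltL r)

theorem mem_altSet {α : Type} {r : α → α → Prop} {S : Finset α} {l : List α} :
    l ∈ altSet r S ↔ S.val = (l : Multiset α) ∧ AltL r l := by
  simp [altSet, Multiset.mem_lists_iff]

theorem exists_rmin {α : Type} (r : α → α → Prop)
    (htr : ∀ a b c, r a b → r b c → r a c) (htot : ∀ a b, a ≠ b → r a b ∨ r b a)
    (S : Finset α) (hS : S.Nonempty) : ∃ m ∈ S, ∀ x ∈ S, x ≠ m → r m x := by
  classical
  induction hS using Finset.Nonempty.cons_induction with
  | singleton a => exact ⟨a, by simp, by simp⟩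
  | cons a s ha hs ih =>
    obtain ⟨m, hm, h⟩ := ih
    have hne : m ≠ a := by rintro rfl; exact ha hm
    rcases htot m a hne with h1 | h1
    · refine ⟨m, by simp [hm], fun x hx hxm => ?_⟩
      rw [Finset.mem_cons] at hx
      rcases hx with rfl | hx
      · exact h1
      · exact h x hx hxm
    · refine ⟨a, by simp, fun x hx hxm => ?_⟩
      rw [Finset.mem_cons] at hx
      rcases hx with rfl | hx
      · exact absurd rfl hxm
      · by_cases hx2 : x = m
        · subst hx2; exact h1
        · exact htr _ _ _ h1 (h x hx hx2)

theorem altSet_card_rec {α : Type} [DecidableEq α] (r : α → α → Prop) (hirr : ∀ a b, r a b → ¬ r b a)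
    (m : α) (S : Finset α) (hm : m ∉ S) (hmin : ∀ x ∈ S, r m x) :
    (altSet r (insert m S)).card = ∑ A ∈ S.powerset, if Even A.card then
      (altSet r A).card * (altSet (fun a b => r b a) (S \ A)).card else 0 := by
  classical
  rw [← Finset.sum_filter]
  simp_rw [← Finset.card_product]
  rw [← Finset.card_sigma]
  symm
  refine Finset.card_bij (fun p _ => p.2.1 ++ m :: p.2.2) ?_ ?_ ?_
  · rintro ⟨A, l1, l2⟩ h
    simp only [Finset.mem_sigma, Finset.mem_filter, Finset.mem_powerset, Finset.mem_product, mem_altSet] at h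
    obtain ⟨⟨hA, hev⟩, ⟨h1, h1'⟩, h2, h2'⟩ := h
    have m1 : ∀ x, x ∈ l1 ↔ x ∈ A := fun x => by rw [← Finset.mem_val, h1]; simp
    have m2 : ∀ x, x ∈ l2 ↔ x ∈ S \ A := fun x => by rw [← Finset.mem_val, h2]; simp
    rw [mem_altSet, altL_append]
    · refine ⟨?_, h1', ?_, h2'⟩
      · rw [Finset.insert_val_of_notMem hm, ← Multiset.coe_add, ← Multiset.cons_coe, ← h1, ← h2, Multiset.add_cons]
        congr 1
        rw [Finset.sdiff_val, add_tsub_cancel_of_le]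
        exact Finset.val_le_iff.2 hA
      · rwa [← Multiset.coe_card, ← h1]
    · intro x hx; rw [m2] at hx; exact hmin x (Finset.mem_sdiff.1 hx).1
    · exact fun x => hirr _ _
    · intro x hx; rw [m1] at hx; exact hmin x (hA hx)
  · rintro ⟨A, l1, l2⟩ h ⟨B, k1, k2⟩ h' heq
    simp only [Finset.mem_sigma, Finset.mem_filter, Finset.mem_powerset, Finset.mem_product, mem_altSet] at h h'
    obtain ⟨⟨hA, hev⟩, ⟨h1, h1'⟩, h2, h2'⟩ := h
    obtain ⟨⟨hB, -⟩, ⟨h3, h3'⟩, h4, h4'⟩ := h'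
    have m1 : m ∉ l1 := fun hh => by
      apply hm; apply hA; rw [← Finset.mem_val, h1]; simpa
    have m3 : m ∉ k1 := fun hh => by
      apply hm; apply hB; rw [← Finset.mem_val, h3]; simpa
    have m2 : m ∉ l2 := fun hh => by
      apply hm; apply Finset.sdiff_subset (t := A); rw [← Finset.mem_val, h2]; simpa
    have m4 : m ∉ k2 := fun hh => by
      apply hm; apply Finset.sdiff_subset (t := B); rw [← Finset.mem_val, h4]; simpa
    dsimp only at heq
    have : l1 = k1 ∧ l2 = k2 := by
      rw [List.append_eq_append_iff] at heq
      rcases heq with ⟨w, e1, e2⟩ | ⟨w, e1, e2⟩ <;> cases w <;> simp_all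
    obtain ⟨rfl, rfl⟩ := this
    have : A = B := Finset.val_injective (h1.trans h3.symm)
    subst this
    rfl
  · intro l hl
    rw [mem_altSet] at hl
    have hml : m ∈ l := by rw [← Multiset.mem_coe, ← hl.1]; simp
    obtain ⟨l1, l2, rfl⟩ := List.append_of_mem hml
    obtain ⟨h1, h2⟩ := hl
    rw [Finset.insert_val_of_notMem hm, ← Multiset.coe_add, ← Multiset.cons_coe, Multiset.add_cons, Multiset.cons_inj_right] at h1
    have hmem : ∀ x, x ∈ S ↔ x ∈ l1 ∨ x ∈ l2 := fun x => by rw [← Finset.mem_val, h1]; simp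
    rw [altL_append _ _ _ (fun x hx => hmin x ((hmem x).2 (.inr hx))) (fun x => hirr _ _) _ (fun x hx => hmin x ((hmem x).2 (.inl hx)))] at h2
    have nd : (l1 : Multiset α).Nodup := Multiset.nodup_of_le (Multiset.le_add_right _ _) (h1 ▸ S.nodup)
    refine ⟨⟨⟨l1, nd⟩, l1, l2⟩, ?_, rfl⟩
    simp only [Finset.mem_sigma, Finset.mem_filter, Finset.mem_powerset, Finset.mem_product, mem_altSet]
    refine ⟨⟨?_, h2.2.1⟩, ⟨trivial, h2.1⟩, ?_, h2.2.2⟩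
    · rw [← Finset.val_le_iff, h1]; exact Multiset.le_add_right _ _
    · rw [Finset.sdiff_val, h1]; exact add_tsub_cancel_left (l1 : Multiset α) (l2 : Multiset α)

theorem altSet_card {α : Type} [DecidableEq α] (n : ℕ) : ∀ (r : α → α → Prop) (hirr : ∀ a b, r a b → ¬ r b a)
    (htr : ∀ a b c, r a b → r b c → r a c) (htot : ∀ a b, a ≠ b → r a b ∨ r b a)
    (S : Finset α), S.card = n → (altSet r S).card = eulerZ n := by
  induction n using Nat.strong_induction_on with
  | _ n ih =>
  intro r hirr htr htot S hS
  cases n with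
  | zero =>
    rw [Finset.card_eq_zero] at hS
    subst hS
    rw [eulerZ, Finset.card_eq_one]
    refine ⟨[], ?_⟩
    ext l
    rw [mem_altSet]
    simp only [Finset.mem_singleton, Finset.empty_val]
    constructor
    · rintro ⟨h, -⟩
      exact (Multiset.coe_eq_zero l).1 h.symm
    · rintro rfl; simp [AltL]
  | succ n =>
    obtain ⟨m, hm, hmin⟩ := exists_rmin r htr htot S (Finset.card_pos.1 (by omega))
    obtain ⟨S', hS', rfl⟩ : ∃ S', m ∉ S' ∧ S = insert m S' := ⟨S.erase m, by simp, by simp [Finset.insert_erase hm]⟩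
    rw [Finset.card_insert_of_notMem hS'] at hS
    have hS : S'.card = n := by omega
    rw [altSet_card_rec r hirr m S' hS' (fun x hx => hmin x (by simp [hx]) (by rintro rfl; exact hS' hx)), eulerZ_succ]
    have := Finset.sum_powerset_apply_card (fun k => if Even k then eulerZ k * eulerZ (n-k) else 0) (x := S')
    rw [hS] at this
    simp only [smul_eq_mul] at this
    rw [← this]
    refine Finset.sum_congr rfl fun A hA => ?_
    rw [Finset.mem_powerset] at hA
    have hc := Finset.card_le_card hA
    split_ifs
    · rw [ih A.card (by omega) r hirr htr htot A rfl, ih (n - A.card) (by omega) (fun a b => r b a)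
        (fun a b => hirr b a) (fun a b c h1 h2 => htr _ _ _ h2 h1) (fun a b h => (htot a b h).symm) (S' \ A)
        (by rw [Finset.card_sdiff_of_subset hA, hS])]
    · rfl

theorem alt_iff_ofFn {n : ℕ} (σ : Equiv.Perm (Fin n)) : IsAlternating σ ↔ AltL (· < ·) (List.ofFn σ) := by
  rw [altL_iff]
  constructor
  · intro h i hi
    simp only [List.length_ofFn] at hi
    have := h (⟨i, by omega⟩, ⟨i+1, hi⟩) rfl
    simpa using this
  · rintro h ⟨⟨i, hi⟩, ⟨j, hj⟩⟩ hij
    dsimp at hij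
    subst hij
    have := h i (by simpa using hj)
    simpa using this

theorem alt_count (n : ℕ) : Nat.card {σ : Equiv.Perm (Fin n) // IsAlternating σ} = eulerZ n := by
  rw [← altSet_card (α := Fin n) n (· < ·) (fun a b => lt_asymm) (fun a b c => lt_trans)
    (fun a b => lt_or_gt_of_ne) Finset.univ (by simp)]
  rw [← Nat.card_eq_finsetCard]
  refine Nat.card_congr (Equiv.ofBijective (fun σ => ⟨List.ofFn σ.1, ?_⟩) ⟨?_, ?_⟩)
  · rw [mem_altSet]
    refine ⟨?_, (alt_iff_ofFn _).1 σ.2⟩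
    refine (Multiset.Nodup.ext Finset.univ.nodup ?_).2 ?_
    · rw [Multiset.coe_nodup, List.nodup_ofFn]; exact σ.1.injective
    · intro a
      simp only [Finset.mem_val, Finset.mem_univ, Multiset.mem_coe, List.mem_ofFn, true_iff]
      exact σ.1.surjective a
  · rintro ⟨σ, h⟩ ⟨τ, h'⟩ e
    simp only [Subtype.mk.injEq] at e ⊢
    exact DFunLike.coe_injective (List.ofFn_injective e)
  · rintro ⟨l, hl⟩
    have hl' := mem_altSet.1 hl
    have hlen : l.length = n := by
      have := congrArg Multiset.card hl'.1
      simpa using this.symm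
    have hnd : l.Nodup := by
      rw [← Multiset.coe_nodup, ← hl'.1]; exact Finset.univ.nodup
    have hb : Function.Bijective (fun i : Fin n => l.get (i.cast hlen.symm)) :=
      Finite.injective_iff_bijective.1
        ((List.nodup_iff_injective_get.1 hnd).comp (Fin.cast_injective _))
    have he : List.ofFn (Equiv.ofBijective _ hb) = l := by
      apply List.ext_getElem
      · simp [hlen]
      · intro i h1 h2
        simp
    exact ⟨⟨Equiv.ofBijective _ hb, (alt_iff_ofFn _).2 (by rw [he]; exact hl'.2)⟩, Subtype.ext he⟩

def IsFor {α : Type} [DecidableEq α] (S : Finset α) (R : Finset (α × α)) : Prop :=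
  (∀ x y, (x, y) ∈ R → x ∈ S ∧ y ∈ S) ∧ (∀ x, (x, x) ∉ R) ∧
  (∀ x y z, (x, y) ∈ R → (y, z) ∈ R → (x, z) ∈ R) ∧
  (∀ x y z, (x, y) ∈ R → (x, z) ∈ R → y = z ∨ (y, z) ∈ R ∨ (z, y) ∈ R)

open Classical in
noncomputable def forests {α : Type} [DecidableEq α] (S : Finset α) : Finset (Finset (α × α)) :=
  (S ×ˢ S).powerset.filter (IsFor S)

theorem mem_forests {α : Type} [DecidableEq α] {S : Finset α} {R : Finset (α × α)} :
    R ∈ forests S ↔ IsFor S R := by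
  classical
  rw [forests, Finset.mem_filter, Finset.mem_powerset]
  refine and_iff_right_of_imp fun h => ?_
  rintro ⟨x, y⟩ hxy
  exact Finset.mem_product.2 (h.1 x y hxy)

def wt {α : Type} [LinearOrder α] (R : Finset (α × α)) : ℤ := (-1) ^ (R.filter (fun p => p.1 < p.2)).card

noncomputable def Wsum {α : Type} [LinearOrder α] (S : Finset α) : ℤ := ∑ R ∈ forests S, wt R

def glue {α : Type} [DecidableEq α] (C : Finset α) (r : α) (R1 R2 : Finset (α × α)) : Finset (α × α) :=
  R1 ∪ (C.erase r ×ˢ {r} ∪ R2)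

theorem mem_glue {α : Type} [DecidableEq α] {C : Finset α} {r : α} {R1 R2 : Finset (α × α)} {x y : α} :
    (x, y) ∈ glue C r R1 R2 ↔ (x, y) ∈ R1 ∨ ((x ≠ r ∧ x ∈ C) ∧ y = r) ∨ (x, y) ∈ R2 := by
  simp only [glue, Finset.mem_union, Finset.mem_product, Finset.mem_erase, Finset.mem_singleton]

theorem wt_glue {α : Type} [LinearOrder α] {C D : Finset α} {r : α} {R1 R2 : Finset (α × α)}
    (hr : r ∈ C) (hCD : Disjoint C D) (h1 : IsFor (C.erase r) R1) (h2 : IsFor D R2) :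
    wt (glue C r R1 R2) = (-1) ^ (C.filter (· < r)).card * (wt R1 * wt R2) := by
  have hd1 : Disjoint R1 (C.erase r ×ˢ {r} ∪ R2) := by
    rw [Finset.disjoint_left]
    rintro ⟨x, y⟩ hx hy
    have := h1.1 x y hx
    simp only [Finset.mem_union, Finset.mem_product, Finset.mem_erase, Finset.mem_singleton] at this hy
    rcases hy with hy | hy
    · exact this.2.1 hy.2
    · exact Finset.disjoint_left.1 hCD this.1.2 (h2.1 x y hy).1
  have hd2 : Disjoint (C.erase r ×ˢ {r}) R2 := by
    rw [Finset.disjoint_left]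
    rintro ⟨x, y⟩ hx hy
    simp only [Finset.mem_product, Finset.mem_erase, Finset.mem_singleton] at hx
    exact Finset.disjoint_left.1 hCD hx.1.2 (h2.1 x y hy).1
  have hc : ((C.erase r ×ˢ {r}).filter (fun p => p.1 < p.2)).card = (C.filter (· < r)).card := by
    refine Finset.card_bij (fun p _ => p.1) ?_ ?_ ?_
    · rintro ⟨x, y⟩ h
      simp at h ⊢
      grind
    · rintro ⟨x, y⟩ h ⟨x', y'⟩ h' e
      simp at h h' e ⊢
      grind
    · intro x hx
      simp at hx
      exact ⟨(x, r), by simp [hx, hx.2.ne], rfl⟩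
  unfold wt
  rw [glue, Finset.filter_union, Finset.filter_union, Finset.card_union_of_disjoint, Finset.card_union_of_disjoint, hc]
  · ring
  · exact Finset.disjoint_filter_filter hd2
  · rw [← Finset.filter_union]; exact Finset.disjoint_filter_filter hd1

theorem glue_isFor {α : Type} [DecidableEq α] {C D : Finset α} {r : α} {R1 R2 : Finset (α × α)}
    (hr : r ∈ C) (hCD : Disjoint C D) (h1 : IsFor (C.erase r) R1) (h2 : IsFor D R2) :
    IsFor (C ∪ D) (glue C r R1 R2) := by
  have hd : ∀ x, x ∈ C → x ∉ D := fun x hx => Finset.disjoint_left.1 hCD hx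
  obtain ⟨a1, a2, a3, a4⟩ := h1
  obtain ⟨b1, b2, b3, b4⟩ := h2
  simp only [Finset.mem_erase] at a1
  refine ⟨?_, ?_, ?_, ?_⟩
  · intro x y; rw [mem_glue]; grind
  · intro x; rw [mem_glue]; grind
  · intro x y z; simp only [mem_glue]; grind
  · intro x y z; simp only [mem_glue]; grind

theorem exists_top {α : Type} [DecidableEq α] {S : Finset α} {R : Finset (α × α)} (h : IsFor S R) (a : α) :
    ∃ r, (r = a ∨ (a, r) ∈ R) ∧ ∀ y, (r, y) ∉ R := by
  by_cases h0 : ∃ y, (a, y) ∈ R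
  · obtain ⟨y0, hy0⟩ := h0
    obtain ⟨r, hr, hmax⟩ := Finset.exists_max_image (S.filter (fun y => (a, y) ∈ R))
      (fun y => (S.filter (fun z => (z, y) ∈ R)).card) ⟨y0, by simp [hy0, (h.1 _ _ hy0).2]⟩
    simp at hr
    refine ⟨r, .inr hr.2, fun y hy => ?_⟩
    have := hmax y (by simp [(h.1 _ _ hy).2]; exact h.2.2.1 _ _ _ hr.2 hy)
    refine absurd this (not_le.2 (Finset.card_lt_card ?_))
    rw [Finset.ssubset_iff_of_subset]
    · exact ⟨r, by simp [hy, hr.1], by simp [h.2.1]⟩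
    · intro z hz
      simp at hz ⊢
      exact ⟨hz.1, h.2.2.1 _ _ _ hz.2 hy⟩
  · push Not at h0
    exact ⟨a, .inl rfl, h0⟩

theorem Wsum_rec {α : Type} [LinearOrder α] (a : α) (S : Finset α) (ha : a ∉ S) :
    Wsum (insert a S) = ∑ A ∈ S.powerset, ∑ r ∈ insert a A,
      (-1) ^ ((insert a A).filter (· < r)).card * (Wsum ((insert a A).erase r) * Wsum (S \ A)) := by
  simp only [Wsum, Finset.sum_mul_sum]
  simp only [Finset.mul_sum]
  simp only [Finset.sum_sigma']
  symm
  refine Finset.sum_bij (fun p _ => glue (insert a p.1) p.2.1 p.2.2.1 p.2.2.2) ?_ ?_ ?_ ?_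
  · rintro ⟨A, r, R1, R2⟩ h
    simp only [Finset.mem_sigma, Finset.mem_powerset, mem_forests] at h ⊢
    obtain ⟨hA, hr, h1, h2⟩ := h
    have hCD : Disjoint (insert a A) (S \ A) := by
      rw [Finset.disjoint_left]; simp; grind
    have := glue_isFor hr hCD h1 h2
    convert this using 1
    ext x; simp; grind
  · rintro ⟨A, r, R1, R2⟩ h ⟨A', r', R1', R2'⟩ h' heq
    simp only [Finset.mem_sigma, Finset.mem_powerset, mem_forests] at h h'
    dsimp only at heq
    have key : ∀ A r R1 R2, A ⊆ S ∧ r ∈ insert a A ∧ IsFor ((insert a A).erase r) R1 ∧ IsFor (S \ A) R2 →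
        (∀ s, ((s = a ∨ (a, s) ∈ glue (insert a A) r R1 R2) ∧ ∀ y, (s, y) ∉ glue (insert a A) r R1 R2) ↔ s = r) ∧
        (∀ x, x ∈ insert a A ↔ x = r ∨ (x, r) ∈ glue (insert a A) r R1 R2) ∧
        (∀ x y, (x, y) ∈ R1 ↔ (x, y) ∈ glue (insert a A) r R1 R2 ∧ x ∈ insert a A ∧ y ≠ r) ∧
        (∀ x y, (x, y) ∈ R2 ↔ (x, y) ∈ glue (insert a A) r R1 R2 ∧ x ∉ insert a A) := by
      clear heq h h'
      intro A r R1 R2 ⟨hA, hr, ⟨a1, a2, a3, a4⟩, ⟨b1, b2, b3, b4⟩⟩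
      simp only [mem_glue]
      simp only [Finset.mem_erase, Finset.mem_sdiff, Finset.mem_insert] at *
      have hSA : ∀ x, x ∈ A → x ∈ S := fun x hx => hA hx
      refine ⟨?_, ?_, ?_, ?_⟩
      · intro s
        constructor
        · rintro ⟨h1, h2⟩
          by_contra hs
          apply h2 r
          grind
        · rintro rfl
          refine ⟨?_, ?_⟩ <;> grind
      · grind
      · grind
      · grind
    obtain ⟨k1, k2, k3, k4⟩ := key _ _ _ _ h
    obtain ⟨l1, l2, l3, l4⟩ := key _ _ _ _ h'
    rw [heq] at k1 k2 k3 k4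
    have hr : r = r' := (l1 r).1 ((k1 r).2 rfl)
    subst hr
    have hI : ∀ x, x ∈ insert a A ↔ x ∈ insert a A' := fun x => (k2 x).trans (l2 x).symm
    have hA : A = A' := by
      ext x
      have := hI x
      have := @h.1 x
      have := @h'.1 x
      simp at *
      grind
    subst hA
    have e1 : R1 = R1' := by ext ⟨x, y⟩; rw [k3, l3]
    have e2 : R2 = R2' := by ext ⟨x, y⟩; rw [k4, l4]
    subst e1 e2
    rfl
  · intro R hR
    rw [mem_forests] at hR
    obtain ⟨r, hr1, hr2⟩ := exists_top hR a
    obtain ⟨a1, a2, a3, a4⟩ := hR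
    set A := S.filter (fun x => x = r ∨ (x, r) ∈ R) with hA
    have hC : ∀ x, x ∈ insert a A ↔ x = r ∨ (x, r) ∈ R := by
      intro x
      have := a1 x r
      have := a1 a r
      simp [hA] at *
      grind
    refine ⟨⟨A, r, R.filter (fun p => p.1 ∈ insert a A ∧ p.2 ≠ r), R.filter (fun p => p.1 ∉ insert a A)⟩, ?_, ?_⟩
    · simp only [Finset.mem_sigma, Finset.mem_powerset, mem_forests]
      refine ⟨Finset.filter_subset _ _, (hC r).2 (.inl rfl), ⟨?_, ?_, ?_, ?_⟩, ⟨?_, ?_, ?_, ?_⟩⟩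
      · simp only [Finset.mem_filter, Finset.mem_erase, hC]; grind
      · simp only [Finset.mem_filter, Finset.mem_erase, hC]; grind
      · simp only [Finset.mem_filter, Finset.mem_erase, hC]; grind
      · simp only [Finset.mem_filter, Finset.mem_erase, hC]; grind
      · have hS : ∀ x, x ∈ S \ A ↔ x ∈ insert a S ∧ x ∉ insert a A := by
          intro x; simp; grind
        simp only [Finset.mem_filter, hS, hC]; grind
      · simp only [Finset.mem_filter, hC]; grind
      · simp only [Finset.mem_filter, hC]; grind
      · simp only [Finset.mem_filter, hC]; grind
    · ext ⟨x, y⟩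
      rw [mem_glue]
      simp only [Finset.mem_filter, hC]
      grind
  · rintro ⟨A, r, R1, R2⟩ h
    simp only [Finset.mem_sigma, Finset.mem_powerset, mem_forests] at h ⊢
    obtain ⟨hA, hr, h1, h2⟩ := h
    have hCD : Disjoint (insert a A) (S \ A) := by
      rw [Finset.disjoint_left]; simp; grind
    exact (wt_glue hr hCD h1 h2).symm

theorem alt_rank {α : Type} [LinearOrder α] (C : Finset α) :
    ∑ r ∈ C, (-1 : ℤ) ^ (C.filter (· < r)).card = if Even C.card then 0 else 1 := by
  induction C using Finset.induction_on_max with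
  | empty => simp
  | insert a s h ih =>
    have ha : a ∉ s := fun hh => lt_irrefl _ (h a hh)
    rw [Finset.sum_insert ha, Finset.card_insert_of_notMem ha]
    have h1 : (insert a s).filter (· < a) = s := by
      ext x; simp; grind
    have h2 : ∀ r ∈ s, (insert a s).filter (· < r) = s.filter (· < r) := by
      intro r hr; ext x; simp; grind
    rw [h1, Finset.sum_congr rfl (fun r hr => by rw [h2 r hr]), ih]
    by_cases he : Even s.card
    · simp [he, Nat.even_add_one]
    · simp [he, Nat.even_add_one, Nat.not_even_iff_odd.1 he]

theorem Wsum_eq {α : Type} [LinearOrder α] (n : ℕ) : ∀ (S : Finset α), S.card = n → Wsum S = eulerZ n := by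
  induction n using Nat.strong_induction_on with
  | _ n ih =>
  intro S hS
  cases n with
  | zero =>
    rw [Finset.card_eq_zero] at hS
    subst hS
    have : forests (∅ : Finset α) = {∅} := by
      ext R
      rw [mem_forests, Finset.mem_singleton]
      constructor
      · intro h
        rw [Finset.eq_empty_iff_forall_notMem]
        rintro ⟨x, y⟩ hx
        simpa using (h.1 x y hx).1
      · rintro rfl; simp [IsFor]
    rw [Wsum, this]
    simp [wt, eulerZ]
  | succ n =>
    obtain ⟨m, hm⟩ := Finset.card_pos.1 (show 0 < S.card by omega)
    obtain ⟨S', hS', rfl⟩ : ∃ S', m ∉ S' ∧ S = insert m S' := ⟨S.erase m, by simp, by simp [Finset.insert_erase hm]⟩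
    rw [Finset.card_insert_of_notMem hS'] at hS
    have hS : S'.card = n := by omega
    rw [Wsum_rec m S' hS', eulerZ_succ]
    have := Finset.sum_powerset_apply_card (fun k => if Even k then eulerZ k * eulerZ (n-k) else 0) (x := S')
    rw [hS] at this
    simp only [smul_eq_mul] at this
    rw [← this]
    push_cast
    refine Finset.sum_congr rfl fun A hA => ?_
    rw [Finset.mem_powerset] at hA
    have hc := Finset.card_le_card hA
    have hmA : m ∉ A := fun h => hS' (hA h)
    have : ∀ r ∈ insert m A, (-1 : ℤ) ^ ((insert m A).filter (· < r)).card * (Wsum ((insert m A).erase r) * Wsum (S' \ A))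
        = (-1 : ℤ) ^ ((insert m A).filter (· < r)).card * (eulerZ A.card * eulerZ (n - A.card)) := by
      intro r hr
      rw [ih A.card (by omega) _ (by rw [Finset.card_erase_of_mem hr, Finset.card_insert_of_notMem hmA]; rfl), ih (n - A.card) (by omega) (S' \ A)
        (by rw [Finset.card_sdiff_of_subset hA, hS])]
    rw [Finset.sum_congr rfl this, ← Finset.sum_mul, alt_rank, Finset.card_insert_of_notMem hmA]
    by_cases he : Even A.card <;> simp [he, Nat.even_add_one]

theorem onPath_iff {n : ℕ} {T : SimpleGraph (Fin (n+1))} (hT : T.IsTree) {i j : Fin (n+1)}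
    (p : T.Walk i 0) (hp : p.IsPath) : OnPath T i j ↔ j ∈ p.support := by
  refine ⟨fun h => h p hp, fun h q hq => ?_⟩
  rwa [(hT.existsUnique_path i 0).unique hq hp]

theorem onPath_exists {n : ℕ} {T : SimpleGraph (Fin (n+1))} (hT : T.IsTree) (i : Fin (n+1)) :
    ∃ p : T.Walk i 0, p.IsPath ∧ ∀ j, OnPath T i j ↔ j ∈ p.support := by
  obtain ⟨p, hp, -⟩ := hT.existsUnique_path i 0
  exact ⟨p, hp, fun j => onPath_iff hT p hp⟩

theorem onPath_refl {n : ℕ} (T : SimpleGraph (Fin (n+1))) (i : Fin (n+1)) : OnPath T i i :=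
  fun p _ => p.start_mem_support

theorem onPath_zero {n : ℕ} (T : SimpleGraph (Fin (n+1))) (i : Fin (n+1)) : OnPath T i 0 :=
  fun p _ => p.end_mem_support

theorem eq_zero_of_onPath_zero {n : ℕ} {T : SimpleGraph (Fin (n+1))} {j : Fin (n+1)}
    (h : OnPath T 0 j) : j = 0 := by
  simpa using h .nil (by simp)

theorem onPath_chain {n : ℕ} {T : SimpleGraph (Fin (n+1))} (hT : T.IsTree) {i j k : Fin (n+1)}
    (hj : OnPath T i j) (hk : OnPath T i k) : OnPath T j k ∨ OnPath T k j := by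
  obtain ⟨p, hp, h⟩ := onPath_exists hT i
  rw [h, SimpleGraph.Walk.mem_support_iff_exists_getVert] at hj hk
  obtain ⟨a, rfl, ha⟩ := hj
  obtain ⟨b, rfl, hb⟩ := hk
  have key : ∀ a b, a ≤ b → OnPath T (p.getVert a) (p.getVert b) := by
    intro a b hab
    rw [onPath_iff hT (p.drop a) (hp.drop a), SimpleGraph.Walk.mem_support_iff_exists_getVert]
    by_cases hbl : b ≤ p.length
    · refine ⟨b - a, ?_, ?_⟩
      · rw [SimpleGraph.Walk.drop_getVert]; congr 1; omega
      · rw [SimpleGraph.Walk.drop_length]; omega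
    · refine ⟨(p.drop a).length, ?_, le_rfl⟩
      rw [SimpleGraph.Walk.getVert_length, SimpleGraph.Walk.getVert_of_length_le _ (by omega)]
  rcases le_total a b with hab | hab
  · exact .inl (key _ _ hab)
  · exact .inr (key _ _ hab)

theorem onPath_trans {n : ℕ} {T : SimpleGraph (Fin (n+1))} (hT : T.IsTree) {i j k : Fin (n+1)}
    (hj : OnPath T i j) (hk : OnPath T j k) : OnPath T i k := by
  obtain ⟨p, hp, h⟩ := onPath_exists hT i
  rw [h] at hj ⊢
  rw [onPath_iff hT (p.dropUntil j hj) (hp.dropUntil hj)] at hk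
  exact p.support_dropUntil_subset_support hj hk

theorem onPath_antisymm {n : ℕ} {T : SimpleGraph (Fin (n+1))} (hT : T.IsTree) {i j : Fin (n+1)}
    (hj : OnPath T i j) (hi : OnPath T j i) : i = j := by
  by_contra hne
  obtain ⟨p, hp, h⟩ := onPath_exists hT i
  obtain ⟨q, hq, h'⟩ := onPath_exists hT j
  rw [h] at hj
  rw [h'] at hi
  have e1 : p.dropUntil j hj = q := (hT.existsUnique_path j 0).unique (hp.dropUntil hj) hq
  have e2 : q.dropUntil i hi = p := (hT.existsUnique_path i 0).unique (hq.dropUntil hi) hp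
  have l1 := congrArg SimpleGraph.Walk.length (p.take_spec hj)
  have l2 := congrArg SimpleGraph.Walk.length (q.take_spec hi)
  rw [SimpleGraph.Walk.length_append, e1] at l1
  rw [SimpleGraph.Walk.length_append, e2] at l2
  exact hne (SimpleGraph.Walk.eq_of_length_eq_zero (p := p.takeUntil j hj) (by omega))

theorem adj_iff_cover {n : ℕ} {T : SimpleGraph (Fin (n+1))} (hT : T.IsTree) (i j : Fin (n+1)) :
    T.Adj i j ↔ i ≠ j ∧ ((OnPath T i j ∧ ∀ k, OnPath T i k → k = i ∨ OnPath T j k) ∨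
      (OnPath T j i ∧ ∀ k, OnPath T j k → k = j ∨ OnPath T i k)) := by
  have key1 : ∀ i j, T.Adj i j → ¬ OnPath T j i →
      (OnPath T i j ∧ ∀ k, OnPath T i k → k = i ∨ OnPath T j k) := by
    intro i j hadj hn
    obtain ⟨q, hq, h⟩ := onPath_exists hT j
    rw [h] at hn
    have hc : ∀ k, OnPath T i k ↔ k ∈ (SimpleGraph.Walk.cons hadj q).support :=
      fun k => onPath_iff hT _ (hq.cons hn)
    simp only [hc, h, SimpleGraph.Walk.support_cons, List.mem_cons]
    exact ⟨.inr q.start_mem_support, fun k hk => hk⟩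
  have key2 : ∀ i j, i ≠ j → (OnPath T i j ∧ ∀ k, OnPath T i k → k = i ∨ OnPath T j k) → T.Adj i j := by
    rintro i j hne ⟨h1, h2⟩
    obtain ⟨p, hp, h⟩ := onPath_exists hT i
    cases p with
    | nil => exact absurd (eq_zero_of_onPath_zero h1).symm hne
    | @cons _ m _ hadj q =>
      rw [SimpleGraph.Walk.cons_isPath_iff] at hp
      have hm := onPath_iff hT (j := j) q hp.1
      rw [h, SimpleGraph.Walk.support_cons, List.mem_cons] at h1
      have hmj : OnPath T m j := hm.2 (h1.resolve_left (Ne.symm hne))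
      have him : OnPath T i m := by rw [h]; simp
      have hjm := (h2 m him).resolve_left hadj.ne'
      rwa [onPath_antisymm hT hjm hmj]
  constructor
  · intro hadj
    refine ⟨hadj.ne, ?_⟩
    by_cases hn : OnPath T j i
    · exact .inr (key1 j i hadj.symm fun h => hadj.ne (onPath_antisymm hT h hn))
    · exact .inl (key1 i j hadj hn)
  · rintro ⟨hne, h | h⟩
    · exact key2 i j hne h
    · exact (key2 j i hne.symm h).symm

open Classical in
noncomputable def relOf {n : ℕ} (T : SimpleGraph (Fin (n+1))) : Finset (Fin (n+1) × Fin (n+1)) :=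
  Finset.univ.filter (fun p => p.1 ≠ p.2 ∧ p.2 ≠ 0 ∧ OnPath T p.1 p.2)

theorem mem_relOf {n : ℕ} {T : SimpleGraph (Fin (n+1))} {x y : Fin (n+1)} :
    (x, y) ∈ relOf T ↔ x ≠ y ∧ y ≠ 0 ∧ OnPath T x y := by
  simp [relOf]

theorem wt_relOf {n : ℕ} (T : SimpleGraph (Fin (n+1))) : wt (relOf T) = (-1) ^ treeInv T := by
  rw [wt, treeInv, ← Nat.card_eq_finsetCard]
  congr 1
  refine Nat.card_congr (Equiv.subtypeEquivRight ?_)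
  rintro ⟨x, y⟩
  rw [Finset.mem_filter, mem_relOf]
  constructor
  · rintro ⟨⟨h1, h2, h3⟩, h4⟩
    refine ⟨?_, h4, h3⟩
    rcases Nat.eq_zero_or_pos x.val with h | h
    · have : x = 0 := Fin.ext h
      subst this
      exact absurd (eq_zero_of_onPath_zero h3) h2
    · exact h
  · rintro ⟨h1, h2, h3⟩
    dsimp only at *
    refine ⟨⟨h2.ne, ?_, h3⟩, h2⟩
    rintro rfl
    exact absurd h2 (Fin.not_lt_zero _)

theorem relOf_isFor {n : ℕ} {T : SimpleGraph (Fin (n+1))} (hT : T.IsTree) :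
    IsFor (Finset.univ.erase 0) (relOf T) := by
  refine ⟨?_, ?_, ?_, ?_⟩
  · intro x y
    rw [mem_relOf]
    rintro ⟨h1, h2, h3⟩
    simp only [Finset.mem_erase, Finset.mem_univ, and_true]
    refine ⟨?_, h2⟩
    rintro rfl
    exact h2 (eq_zero_of_onPath_zero h3)
  · intro x; simp [mem_relOf]
  · intro x y z
    simp only [mem_relOf]
    rintro ⟨h1, h2, h3⟩ ⟨h4, h5, h6⟩
    refine ⟨?_, h5, onPath_trans hT h3 h6⟩
    rintro rfl
    exact h1 (onPath_antisymm hT h3 h6)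
  · intro x y z
    simp only [mem_relOf]
    rintro ⟨h1, h2, h3⟩ ⟨h4, h5, h6⟩
    by_cases e : y = z
    · exact .inl e
    · rcases onPath_chain hT h3 h6 with h | h
      · exact .inr (.inl ⟨e, h5, h⟩)
      · exact .inr (.inr ⟨Ne.symm e, h2, h⟩)

theorem relOf_inj {n : ℕ} {T T' : SimpleGraph (Fin (n+1))} (hT : T.IsTree) (hT' : T'.IsTree)
    (h : relOf T = relOf T') : T = T' := by
  have hP : ∀ i j, OnPath T i j ↔ OnPath T' i j := by
    intro i j
    by_cases hj : j = 0
    · subst hj; exact iff_of_true (onPath_zero _ _) (onPath_zero _ _)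
    by_cases hij : i = j
    · subst hij; exact iff_of_true (onPath_refl _ _) (onPath_refl _ _)
    have := Finset.ext_iff.1 h (i, j)
    rw [mem_relOf, mem_relOf] at this
    tauto
  ext i j
  rw [adj_iff_cover hT, adj_iff_cover hT']
  simp only [hP]

theorem relOf_surj {n : ℕ} {R : Finset (Fin (n+1) × Fin (n+1))} (hR : IsFor (Finset.univ.erase 0) R) :
    ∃ T : SimpleGraph (Fin (n+1)), T.IsTree ∧ relOf T = R := by
  classical
  obtain ⟨a1, a2, a3, a4⟩ := hR
  simp only [Finset.mem_erase, Finset.mem_univ, and_true] at a1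
  obtain ⟨L, hL⟩ : ∃ L : Fin (n+1) → Fin (n+1) → Prop, ∀ i j, L i j ↔ (i ≠ 0 ∧ j = 0) ∨ (i, j) ∈ R :=
    ⟨_, fun _ _ => Iff.rfl⟩
  have Lirr : ∀ i, ¬ L i i := by intro i; rw [hL]; grind
  have Ltr : ∀ i j k, L i j → L j k → L i k := by intro i j k; simp only [hL]; grind
  have Lch : ∀ i j k, L i j → L i k → j = k ∨ L j k ∨ L k j := by
    intro i j k; simp only [hL]; grind
  have Lzero : ∀ j, ¬ L 0 j := by intro j; rw [hL]; grind
  obtain ⟨d, hd⟩ : ∃ d : Fin (n+1) → ℕ, ∀ i j, L i j → d j < d i := by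
    refine ⟨fun i => (Finset.univ.filter (fun k => L i k)).card, fun i j hij => Finset.card_lt_card ?_⟩
    rw [Finset.ssubset_iff_of_subset]
    · exact ⟨j, by simp [hij], by simp [Lirr]⟩
    · intro k hk
      simp at hk ⊢
      exact Ltr _ _ _ hij hk
  have hpar : ∀ i, ∃ p, i ≠ 0 → L i p ∧ ∀ k, L i k → k = p ∨ L p k := by
    intro i
    by_cases hi : i = 0
    · exact ⟨0, fun h => absurd hi h⟩
    obtain ⟨p, hp, hmax⟩ := Finset.exists_max_image (Finset.univ.filter (fun k => L i k)) d
      ⟨0, by simp [hL, hi]⟩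
    simp at hp
    refine ⟨p, fun _ => ⟨hp, fun k hk => ?_⟩⟩
    have h1 := hmax k (by simpa using hk)
    rcases Lch _ _ _ hk hp with h | h | h
    · exact .inl h
    · have := hd _ _ h
      omega
    · exact .inr h
  choose par hpar using hpar
  set G : SimpleGraph (Fin (n+1)) := SimpleGraph.fromRel (fun x y => x ≠ 0 ∧ y = par x) with hG
  have hadj : ∀ i, i ≠ 0 → G.Adj i (par i) := by
    intro i hi
    rw [hG, SimpleGraph.fromRel_adj]
    refine ⟨fun h => Lirr i ?_, .inl ⟨hi, rfl⟩⟩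
    have := (hpar i hi).1
    rwa [← h] at this
  have hpath : ∀ m i, d i = m → ∃ p : G.Walk i 0, p.IsPath ∧ ∀ j, j ∈ p.support ↔ j = i ∨ L i j := by
    intro m
    induction m using Nat.strong_induction_on with
    | _ m ih =>
    intro i hi
    by_cases hi0 : i = 0
    · subst hi0
      exact ⟨.nil, by simp, fun j => by simp [Lzero]⟩
    · obtain ⟨h1, h2⟩ := hpar i hi0
      obtain ⟨q, hq, hs⟩ := ih (d (par i)) (hi ▸ hd _ _ h1) (par i) rfl
      refine ⟨.cons (hadj i hi0) q, hq.cons ?_, fun j => ?_⟩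
      · rw [hs]
        rintro (h | h)
        · exact (hadj i hi0).ne h
        · exact Lirr _ (Ltr _ _ _ h1 h)
      · rw [SimpleGraph.Walk.support_cons, List.mem_cons, hs]
        constructor
        · rintro (h | rfl | h)
          · exact .inl h
          · exact .inr h1
          · exact .inr (Ltr _ _ _ h1 h)
        · rintro (h | h)
          · exact .inl h
          · exact .inr (h2 j h)
  have hconn : G.Connected := by
    rw [SimpleGraph.connected_iff_exists_forall_reachable]
    refine ⟨0, fun i => ?_⟩
    obtain ⟨p, -⟩ := hpath _ i rfl
    exact p.reachable.symm
  have htree : G.IsTree := by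
    rw [SimpleGraph.isTree_iff_connected_and_card]
    refine ⟨hconn, le_antisymm ?_ hconn.card_vert_le_card_edgeSet_add_one⟩
    have hsub : G.edgeSet ⊆ ((Finset.univ.erase (0 : Fin (n+1))).image (fun i => s(i, par i)) : Finset _) := by
      intro e
      induction e using Sym2.ind with
      | _ x y =>
      rw [SimpleGraph.mem_edgeSet, hG, SimpleGraph.fromRel_adj]
      rintro ⟨-, ⟨h, rfl⟩ | ⟨h, rfl⟩⟩
      · simp only [Finset.coe_image, Set.mem_image]
        exact ⟨x, by simpa using h, rfl⟩
      · simp only [Finset.coe_image, Set.mem_image]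
        exact ⟨y, by simpa using h, Sym2.eq_swap⟩
    have h1 := Set.ncard_le_ncard hsub (Finset.finite_toSet _)
    rw [Set.ncard_coe_finset] at h1
    have h2 := h1.trans Finset.card_image_le
    rw [Finset.card_erase_of_mem (Finset.mem_univ _), Finset.card_univ, Fintype.card_fin] at h2
    rw [Nat.card_coe_set_eq, Nat.card_eq_fintype_card, Fintype.card_fin]
    omega
  refine ⟨G, htree, ?_⟩
  ext ⟨x, y⟩
  obtain ⟨p, hp, hs⟩ := hpath _ x rfl
  rw [mem_relOf, onPath_iff htree p hp, hs, hL]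
  have := a1 x y
  have := a2 x
  grind

theorem tree_sum (n : ℕ) :
    (∑ᶠ T : {G : SimpleGraph (Fin (n+1)) // G.IsTree}, (-1 : ℤ) ^ treeInv T.val)
      = Wsum (Finset.univ.erase (0 : Fin (n+1))) := by
  classical
  rw [finsum_eq_sum_of_fintype, Wsum]
  refine Finset.sum_bij (fun T _ => relOf T.1) ?_ ?_ ?_ ?_
  · intro T _; exact mem_forests.2 (relOf_isFor T.2)
  · intro T _ T' _ h; exact Subtype.ext (relOf_inj T.2 T'.2 h)
  · intro R hR
    obtain ⟨T, hT, h⟩ := relOf_surj (mem_forests.1 hR)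
    exact ⟨⟨T, hT⟩, Finset.mem_univ _, h⟩
  · intro T _; exact (wt_relOf T.1).symm

/-- `I_n(-1) = E_n`: the tree inversion enumerator evaluated at `q = -1`
equals the number of alternating permutations in `S_n`. -/
theorem treeInvEnum_neg_one (n : ℕ) :
    (∑ᶠ T : {G : SimpleGraph (Fin (n+1)) // G.IsTree}, (-1 : ℤ) ^ treeInv T.val)
      = Nat.card {σ : Equiv.Perm (Fin n) // IsAlternating σ} := by
  rw [tree_sum, alt_count, Wsum_eq n _ (by simp)]
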